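/- arXiv:2207.06993 — 5 statements merged into one kernel-verified Lean document; each statement's English description precedes it below -/
import Mathlib

section
/- For any relational frame (X,◁): (1) the operation c_◁ : ℘(X) → ℘(X) defined by c_◁(A) = {x ∈ X : for every x' with x' ◁ x there exists x'' with x' ◁ x'' and x'' ∈ A} is a closure operator on ℘(X), i.e., it is inflationary (A ⊆ c_◁(A)), idempotent (c_◁(c_◁(A)) = c_◁(A)), and monotone (A ⊆ B implies c_◁(A) ⊆ c_◁(B)); and (2) the operation ¬_◁A = {x ∈ X : for all y with y ◁ x, y ∉ A} sends c_◁-fixpoints to c_◁-fixpoints. -/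
/-- The closure operation `c_◁` on subsets of a relational frame `(X, ◁)`. -/
def cl {X : Type*} (lt : X → X → Prop) (A : Set X) : Set X :=
  {x | ∀ x', lt x' x → ∃ x'', lt x' x'' ∧ x'' ∈ A}

/-- The negation operation `¬_◁` on subsets of a relational frame `(X, ◁)`. -/
def negSet {X : Type*} (lt : X → X → Prop) (A : Set X) : Set X :=
  {x | ∀ y, lt y x → y ∉ A}

/-!
For the converse relation `▷`, the direct image (the existential step) is left adjoint to the core
(the universal step). The operation `c_◁` is the closure operator of this Galois connection, and
`¬_◁ A` is the core of `Aᶜ`; every value of the right adjoint of a Galois connection is closed.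
-/

section RelationalFrame

variable {X : Type*} (lt : X → X → Prop)

/-- The converse `▷` of the relation of a frame, as a `SetRel`: the pairs `(x, y)` with `y ◁ x`.
Its image and core are the adjoint pair inducing `c_◁`. -/
def converseRel : SetRel X X := {p | lt p.2 p.1}

theorem cl_eq_closureOperator : cl lt = (converseRel lt).image_core_gc.closureOperator :=
  funext fun _ ↦ Set.ext fun _ ↦ forall₂_congr fun _ _ ↦ exists_congr fun _ ↦ and_comm

theorem subset_cl (A : Set X) : A ⊆ cl lt A := by
  rw [cl_eq_closureOperator]
  exact ClosureOperator.le_closure _ A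

theorem cl_cl (A : Set X) : cl lt (cl lt A) = cl lt A := by
  rw [cl_eq_closureOperator]
  exact ClosureOperator.idempotent _ A

theorem cl_mono : Monotone (cl lt) := by
  rw [cl_eq_closureOperator]
  exact ClosureOperator.monotone _

theorem negSet_eq_core_compl (A : Set X) : negSet lt A = (converseRel lt).core Aᶜ :=
  rfl

theorem cl_negSet (A : Set X) : cl lt (negSet lt A) = negSet lt A := by
  rw [cl_eq_closureOperator, negSet_eq_core_compl]
  exact (converseRel lt).image_core_gc.u_l_u_eq_u Aᶜ

end RelationalFrame

theorem stmt_0_general {X : Type*} (lt : X → X → Prop) :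
    (∀ A : Set X, A ⊆ cl lt A) ∧
    (∀ A : Set X, cl lt (cl lt A) = cl lt A) ∧
    (∀ A B : Set X, A ⊆ B → cl lt A ⊆ cl lt B) ∧
    (∀ A : Set X, cl lt (negSet lt A) = negSet lt A) :=
  ⟨subset_cl lt, cl_cl lt, fun _ _ hAB ↦ cl_mono lt hAB, cl_negSet lt⟩

theorem stmt_0 (X : Type*) [Nonempty X] (lt : X → X → Prop) :
    (∀ A : Set X, A ⊆ cl lt A) ∧
    (∀ A : Set X, cl lt (cl lt A) = cl lt A) ∧
    (∀ A B : Set X, A ⊆ B → cl lt A ⊆ cl lt B) ∧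
    (∀ A : Set X, cl lt A = A → cl lt (negSet lt A) = negSet lt A) := by
  obtain ⟨inflationary, idempotent, monotone, negSet_fixed⟩ := stmt_0_general lt
  exact ⟨inflationary, idempotent, monotone, fun A _ ↦ negSet_fixed A⟩
end

section
/- For any relational frame (X,◁), the following are equivalent: (a) every c_◁-fixpoint A satisfies A ⊆ ¬_◁¬_◁A; (b) ◁ is pseudosymmetric, i.e., for all x ∈ X and all y with y ◁ x, there is a z with z ◁ y such that z pre-refines x. -/
/-- `x` pre-refines `y`: everything open to `x` is open to `y`. -/
def preRefines {X : Type*} (lt : X → X → Prop) (x y : X) : Prop :=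
  ∀ z, lt z x → lt z y

/-!
The elements pre-refining `x` form the closure of `{x}`, the least `c_◁`-fixpoint containing `x`.
Pseudosymmetry therefore says that `x ∈ ¬_◁¬_◁c_◁({x})` for every `x`, and since `¬_◁¬_◁` is
monotone, the inclusion `A ⊆ ¬_◁¬_◁A` for all fixpoints `A` reduces to these principal ones.
-/

section ClosureOperator

variable {α : Type*}

theorem forall_isClosed_subset_iff_forall_mem_singleton (c : ClosureOperator (Set α))
    {f : Set α → Set α} (hf : Monotone f) :
    (∀ A, c.IsClosed A → A ⊆ f A) ↔ ∀ x, x ∈ f (c {x}) := by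
  constructor
  · intro h x
    exact h _ (c.isClosed_closure {x}) (c.le_closure {x} (Set.mem_singleton x))
  · intro h A hA x hx
    have closure_singleton_subset : c {x} ⊆ A :=
      hA.closure_le_iff.mpr (Set.singleton_subset_iff.mpr hx)
    exact hf closure_singleton_subset (h x)

end ClosureOperator

section RelationalFrame

variable {X : Type*} (lt : X → X → Prop)

theorem cl_subset_cl_of_subset_cl {A B : Set X} (hAB : A ⊆ cl lt B) : cl lt A ⊆ cl lt B := by
  intro x hx y hyx
  obtain ⟨z, hyz, hzA⟩ := hx y hyx
  exact hAB hzA y hyz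

/-- The operation `c_◁` as a closure operator on the powerset of `X`, whose closed sets are the
`c_◁`-fixpoints. -/
def clOperator : ClosureOperator (Set X) :=
  ClosureOperator.mk₂ (cl lt) (subset_cl lt) fun _ _ ↦ cl_subset_cl_of_subset_cl lt

theorem isClosed_clOperator_iff {A : Set X} : (clOperator lt).IsClosed A ↔ cl lt A = A :=
  (clOperator lt).isClosed_iff

theorem mem_cl_singleton {x z : X} : z ∈ cl lt {x} ↔ preRefines lt z x := by
  simp [cl, preRefines]

theorem antitone_negSet : Antitone (negSet lt) :=
  fun _ _ hAB _ hx y hyx hyA ↦ hx y hyx (hAB hyA)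

theorem mem_negSet_negSet {A : Set X} {x : X} :
    x ∈ negSet lt (negSet lt A) ↔ ∀ y, lt y x → ∃ z, lt z y ∧ z ∈ A := by
  simp [negSet]

end RelationalFrame

theorem stmt_8 (X : Type*) [Nonempty X] (lt : X → X → Prop) :
    (∀ A : Set X, cl lt A = A → A ⊆ negSet lt (negSet lt A)) ↔
    (∀ x y : X, lt y x → ∃ z, lt z y ∧ preRefines lt z x) := by
  calc
    (∀ A : Set X, cl lt A = A → A ⊆ negSet lt (negSet lt A))
    _ ↔ ∀ A, (clOperator lt).IsClosed A → A ⊆ negSet lt (negSet lt A) := by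
        simp only [isClosed_clOperator_iff]
    _ ↔ ∀ x, x ∈ negSet lt (negSet lt (cl lt {x})) :=
        forall_isClosed_subset_iff_forall_mem_singleton (clOperator lt)
          ((antitone_negSet lt).comp (antitone_negSet lt))
    _ ↔ ∀ x y, lt y x → ∃ z, lt z y ∧ preRefines lt z x := by
        simp only [mem_negSet_negSet, mem_cl_singleton]
end

section
/- Let L be a bounded lattice, Λ a meet-dense set of elements of L, and ¬ a protocomplementation on L. Let P = {(a,¬a) : a ∈ L, a ≠ 0} ∪ {(1,b) : b ∈ Λ, b ≠ 1}, with (a,b) ◁ (c,d) iff c ≰ b. Then the map f(a) = {(x,y) ∈ P : x ≤ a} is a complete embedding of (L,¬) into (𝔏(P,◁), ¬_◁), the relation ◁ is reflexive, and if L is complete, the embedding is an isomorphism. -/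
/-- The relation `◁` on a set `P` of pairs of lattice elements: `(a,b) ◁ (c,d)` iff `c ≰ b`. -/
def ltP {L : Type*} [Lattice L] (P : Set (L × L)) : ↥P → ↥P → Prop :=
  fun p q => ¬ (q.1.1 ≤ p.1.2)

/-- The map `f(a) = {(x,y) ∈ P : x ≤ a}`. -/
def emb {L : Type*} [Lattice L] (P : Set (L × L)) (a : L) : Set ↥P :=
  {p | p.1.1 ≤ a}

/-- The set of pairs `P = {(a,¬a) : a ∈ L, a ≠ 0} ∪ {(1,b) : b ∈ Λ, b ≠ 1}`. -/
def Pproto {L : Type*} [Lattice L] [BoundedOrder L] (neg : L → L) (Λ : Set L) :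
    Set (L × L) :=
  {p | (∃ a : L, a ≠ ⊥ ∧ p = (a, neg a)) ∨ (∃ b ∈ Λ, b ≠ ⊤ ∧ p = ((⊤ : L), b))}

/-!
The set `cl (ltP P) A` consists of the pairs of `P` whose first coordinate lies below every second
coordinate of `P` that bounds the first coordinates of `A` from above. If the second coordinates are
meet-dense, this is the Dedekind–MacNeille closure of the set of first coordinates of `A`, so
`cl (ltP P) A = emb P a` as soon as these have least upper bound `a`. If the first coordinates are
join-dense, every `a` is the least upper bound of the first coordinates of `emb P a`; preservation
of joins, fixpoints and surjectivity are then all computations of least upper bounds. Dually,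
`negSet (ltP P) A = emb P b` as soon as the second coordinates of `A` have greatest lower bound
`b`.
-/

open Set

section Density

variable {α : Type*} [Preorder α] {D E U : Set α} {a : α}

/-- `D` is join-dense: every element is the least upper bound of a, possibly empty, subset of
`D`. -/
def IsJoinDense (D : Set α) : Prop :=
  ∀ a, ∃ S ⊆ D, IsLUB S a

/-- `D` is meet-dense: every element is the greatest lower bound of a, possibly empty, subset of
`D`. -/
def IsMeetDense (D : Set α) : Prop :=
  ∀ a, ∃ S ⊆ D, IsGLB S a

theorem IsJoinDense.isLUB_inter_Iic (hD : IsJoinDense D) (a : α) : IsLUB (D ∩ Iic a) a := by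
  obtain ⟨S, hSD, hS⟩ := hD a
  exact ⟨fun _ hx ↦ hx.2, fun _ hb ↦ hS.2 fun _ hs ↦ hb ⟨hSD hs, hS.1 hs⟩⟩

theorem IsMeetDense.mono (hD : IsMeetDense D) (hDE : D ⊆ E) : IsMeetDense E := fun a ↦
  let ⟨S, hSD, hS⟩ := hD a
  ⟨S, hSD.trans hDE, hS⟩

theorem IsMeetDense.lowerBounds_inter (hD : IsMeetDense D) (hU : IsUpperSet U) :
    lowerBounds (D ∩ U) = lowerBounds U := by
  refine Subset.antisymm (fun x hx u hu ↦ ?_) (lowerBounds_mono_set inter_subset_right)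
  obtain ⟨S, hSD, hS⟩ := hD u
  exact hS.2 fun b hb ↦ hx ⟨hSD hb, hU (hS.1 hb) hu⟩

theorem isUpperSet_upperBounds (s : Set α) : IsUpperSet (upperBounds s) :=
  fun _ _ hab ha ↦ upperBounds_mono_mem hab ha

theorem isLUB_biUnion {ι : Type*} {s : Set ι} {t : ι → Set α} {f : ι → α}
    (ht : ∀ i ∈ s, IsLUB (t i) (f i)) (ha : IsLUB (f '' s) a) : IsLUB (⋃ i ∈ s, t i) a := by
  rwa [biUnion_eq_iUnion, ← isLUB_iUnion_iff_of_isLUB fun i : s ↦ ht i i.2, ← image_eq_range]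

variable [OrderTop α]

theorem lowerBounds_sdiff_singleton_top (s : Set α) : lowerBounds (s \ {⊤}) = lowerBounds s := by
  refine Subset.antisymm (fun x hx b hb ↦ ?_) (lowerBounds_mono_set sdiff_subset)
  by_cases hb' : b = ⊤
  · exact hb' ▸ le_top
  · exact hx ⟨hb, hb'⟩

theorem IsMeetDense.sdiff_singleton_top (hD : IsMeetDense D) : IsMeetDense (D \ {⊤}) := fun a ↦ by
  obtain ⟨S, hSD, hS⟩ := hD a
  refine ⟨S \ {⊤}, sdiff_subset_sdiff_left hSD, ?_⟩
  rwa [IsGLB, lowerBounds_sdiff_singleton_top]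

end Density

section PairFrame

variable {L : Type*} [Lattice L] {P : Set (L × L)} {A : Set P} {S : Set L} {a b : L} {x : P}

theorem mem_cl_ltP_iff : x ∈ cl (ltP P) A ↔
    x.1.1 ∈ lowerBounds (Prod.snd '' P ∩ upperBounds ((fun p : P ↦ p.1.1) '' A)) := by
  have separated_iff (p : P) :
      (ltP P p x → ∃ q, ltP P p q ∧ q ∈ A) ↔ ((∀ q ∈ A, q.1.1 ≤ p.1.2) → x.1.1 ≤ p.1.2) := by
    rw [← not_imp_not]
    simp only [ltP, not_exists, not_and', not_not]
  simp only [cl, mem_ofPred_eq, separated_iff, mem_lowerBounds, mem_inter_iff, and_imp,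
    forall_mem_image, mem_upperBounds, Subtype.forall]

theorem mem_cl_ltP_iff_of_isMeetDense (hP : IsMeetDense (Prod.snd '' P)) :
    x ∈ cl (ltP P) A ↔ x.1.1 ∈ lowerBounds (upperBounds ((fun p : P ↦ p.1.1) '' A)) := by
  rw [mem_cl_ltP_iff, hP.lowerBounds_inter (isUpperSet_upperBounds _)]

theorem cl_ltP_eq_emb_of_isLUB (hP : IsMeetDense (Prod.snd '' P))
    (ha : IsLUB ((fun p : P ↦ p.1.1) '' A) a) : cl (ltP P) A = emb P a := by
  ext x
  rw [mem_cl_ltP_iff_of_isMeetDense hP, ha.upperBounds_eq, lowerBounds_Ici, mem_Iic, emb,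
    mem_ofPred_eq]

theorem negSet_ltP_eq_emb_of_isGLB (hb : IsGLB ((fun p : P ↦ p.1.2) '' A) b) :
    negSet (ltP P) A = emb P b := by
  ext x
  simp only [negSet, ltP, emb, mem_ofPred_eq, le_isGLB_iff hb, mem_lowerBounds, forall_mem_image,
    not_imp_not]

theorem emb_eq_biInter_of_isGLB (ha : IsGLB S a) : emb P a = ⋂ s ∈ S, emb P s := by
  ext x
  simp only [emb, mem_ofPred_eq, mem_iInter, le_isGLB_iff ha, mem_lowerBounds]

theorem image_fst_emb (P : Set (L × L)) (a : L) :
    (fun p : P ↦ p.1.1) '' emb P a = Prod.fst '' P ∩ Iic a := by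
  rw [← image_inter_preimage, ← Subtype.image_preimage_coe, image_image]
  rfl

theorem isLUB_fst_emb (hP : IsJoinDense (Prod.fst '' P)) (a : L) :
    IsLUB ((fun p : P ↦ p.1.1) '' emb P a) a := by
  rw [image_fst_emb]
  exact hP.isLUB_inter_Iic a

theorem emb_injective (hP : IsJoinDense (Prod.fst '' P)) : Function.Injective (emb P) :=
  fun a b hab ↦ (isLUB_fst_emb hP a).unique (hab ▸ isLUB_fst_emb hP b)

theorem cl_ltP_biUnion_emb_of_isLUB (hfst : IsJoinDense (Prod.fst '' P))
    (hsnd : IsMeetDense (Prod.snd '' P)) (ha : IsLUB S a) :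
    cl (ltP P) (⋃ s ∈ S, emb P s) = emb P a := by
  refine cl_ltP_eq_emb_of_isLUB hsnd ?_
  rw [image_iUnion₂]
  exact isLUB_biUnion (fun s _ ↦ isLUB_fst_emb hfst s) (by rwa [image_id'])

end PairFrame

section Protocomplementation

variable {L : Type*} [Lattice L] [BoundedOrder L] {neg : L → L} {Λ : Set L}

theorem isJoinDense_fst_Pproto (neg : L → L) (Λ : Set L) :
    IsJoinDense (Prod.fst '' Pproto neg Λ) := fun a ↦ by
  by_cases ha : a = ⊥
  · exact ⟨∅, empty_subset _, ha ▸ isLUB_empty⟩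
  · exact ⟨{a}, singleton_subset_iff.2 ⟨(a, neg a), Or.inl ⟨a, ha, rfl⟩, rfl⟩, isLUB_singleton⟩

theorem isMeetDense_snd_Pproto (neg : L → L) (hΛ : IsMeetDense Λ) :
    IsMeetDense (Prod.snd '' Pproto neg Λ) :=
  hΛ.sdiff_singleton_top.mono fun b hb ↦ ⟨(⊤, b), Or.inr ⟨b, hb.1, hb.2, rfl⟩, rfl⟩

theorem ltP_Pproto_self (hsemi : ∀ a, a ⊓ neg a = ⊥) (p : Pproto neg Λ) :
    ltP (Pproto neg Λ) p p := by
  obtain ⟨_, ⟨a, ha, rfl⟩ | ⟨b, -, hb, rfl⟩⟩ := p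
  · exact fun hle : a ≤ neg a ↦ ha (by rw [← inf_eq_left.2 hle, hsemi])
  · exact fun hle : ⊤ ≤ b ↦ hb (top_le_iff.1 hle)

theorem neg_le_snd_of_mem_Pproto (hanti : Antitone neg) (htop : neg ⊤ = ⊥) {a : L} {p : L × L}
    (hp : p ∈ Pproto neg Λ) (hpa : p.1 ≤ a) : neg a ≤ p.2 := by
  obtain ⟨c, -, rfl⟩ | ⟨b, -, -, rfl⟩ := hp
  · exact hanti hpa
  · rw [top_le_iff.1 hpa, htop]
    exact bot_le

theorem isGLB_snd_emb_Pproto (hanti : Antitone neg) (htop : neg ⊤ = ⊥) (hbot : neg ⊥ = ⊤) (a : L) :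
    IsGLB ((fun p : Pproto neg Λ ↦ p.1.2) '' emb (Pproto neg Λ) a) (neg a) := by
  refine ⟨forall_mem_image.2 fun p hp ↦ neg_le_snd_of_mem_Pproto hanti htop p.2 hp, fun b hb ↦ ?_⟩
  by_cases ha : a = ⊥
  · rw [ha, hbot]
    exact le_top
  · exact hb ⟨⟨(a, neg a), Or.inl ⟨a, ha, rfl⟩⟩, le_refl a, rfl⟩

end Protocomplementation

/-- Representation of a bounded lattice with a protocomplementation `¬` (an antitone
semicomplementation with `¬0 = 1`): the map `f` is a complete embedding of `(L,¬)` into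
`(𝔏(P,◁), ¬_◁)` (injective, lands in fixpoints, preserves all existing meets and joins,
and commutes with negation), the relation `◁` is reflexive, and if `L` is complete
(every subset has a least upper bound), the embedding is an isomorphism (surjective
onto the fixpoints). -/
theorem stmt_12 {L : Type*} [Lattice L] [BoundedOrder L] (Λ : Set L) (neg : L → L)
    (hΛ : ∀ a : L, ∃ S : Set L, S ⊆ Λ ∧ IsGLB S a)
    (hanti : ∀ a b : L, a ≤ b → neg b ≤ neg a)
    (hsemi : ∀ a : L, a ⊓ neg a = ⊥)
    (hbot : neg ⊥ = ⊤) :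
    Function.Injective (emb (Pproto neg Λ)) ∧
    (∀ a : L, cl (ltP (Pproto neg Λ)) (emb (Pproto neg Λ) a) = emb (Pproto neg Λ) a) ∧
    (∀ (S : Set L) (a : L), IsGLB S a → emb (Pproto neg Λ) a = ⋂ s ∈ S, emb (Pproto neg Λ) s) ∧
    (∀ (S : Set L) (a : L), IsLUB S a →
      emb (Pproto neg Λ) a = cl (ltP (Pproto neg Λ)) (⋃ s ∈ S, emb (Pproto neg Λ) s)) ∧
    (∀ a : L, emb (Pproto neg Λ) (neg a) = negSet (ltP (Pproto neg Λ)) (emb (Pproto neg Λ) a)) ∧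
    Reflexive (ltP (Pproto neg Λ)) ∧
    ((∀ S : Set L, ∃ a : L, IsLUB S a) →
      ∀ A : Set ↥(Pproto neg Λ), cl (ltP (Pproto neg Λ)) A = A →
        ∃ a : L, emb (Pproto neg Λ) a = A) := by
  have hfst : IsJoinDense (Prod.fst '' Pproto neg Λ) := isJoinDense_fst_Pproto neg Λ
  have hsnd : IsMeetDense (Prod.snd '' Pproto neg Λ) := isMeetDense_snd_Pproto neg hΛ
  have htop : neg ⊤ = ⊥ := by rw [← hsemi ⊤, top_inf_eq]
  refine ⟨emb_injective hfst, fun a ↦ cl_ltP_eq_emb_of_isLUB hsnd (isLUB_fst_emb hfst a),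
    fun S a ↦ emb_eq_biInter_of_isGLB, fun S a ha ↦ (cl_ltP_biUnion_emb_of_isLUB hfst hsnd ha).symm,
    fun a ↦ (negSet_ltP_eq_emb_of_isGLB (isGLB_snd_emb_Pproto hanti htop hbot a)).symm,
    ltP_Pproto_self hsemi, fun hL A hA ↦ ?_⟩
  obtain ⟨a, ha⟩ := hL ((fun p ↦ p.1.1) '' A)
  exact ⟨a, (cl_ltP_eq_emb_of_isLUB hsnd ha).symm.trans hA⟩
end

section
/- For any bounded lattice L and protocomplementation ¬ on L, the map a ↦ â on the filter-ideal frame FI(L,¬) is: (1) an embedding of (L,¬) into (𝔏(FI(L,¬)), ¬_◁), i.e., each â is a c_◁-fixpoint and the map is injective and preserves 0, 1, binary meets, binary joins, and ¬; and (2) an isomorphism from (L,¬) onto the subalgebra of (𝔏(FI(L,¬)), ¬_◁) consisting of those c_◁-fixpoints that are compact open in the space S(L). -/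
/-- `F` is a (possibly improper) filter in the lattice `L`. -/
def IsLatFilter {L : Type*} [Lattice L] (F : Set L) : Prop :=
  F.Nonempty ∧ (∀ a ∈ F, ∀ b : L, a ≤ b → b ∈ F) ∧ (∀ a ∈ F, ∀ b ∈ F, a ⊓ b ∈ F)

/-- `I` is an ideal in the lattice `L`. -/
def IsLatIdeal {L : Type*} [Lattice L] (I : Set L) : Prop :=
  I.Nonempty ∧ (∀ a ∈ I, ∀ b : L, b ≤ a → b ∈ I) ∧ (∀ a ∈ I, ∀ b ∈ I, a ⊔ b ∈ I)

/-- The set of states of the filter-ideal frame `FI(L,¬)`: pairs `(F,I)` of a filter `F`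
and an ideal `I` with `F ∩ I = ∅` and `{¬a : a ∈ F} ⊆ I`. -/
def FIstates {L : Type*} [Lattice L] (neg : L → L) : Set (Set L × Set L) :=
  {p | IsLatFilter p.1 ∧ IsLatIdeal p.2 ∧ p.1 ∩ p.2 = ∅ ∧ ∀ a ∈ p.1, neg a ∈ p.2}

/-- The relation of `FI(L,¬)`: `(F,I) ◁ (F',I')` iff `I ∩ F' = ∅`. -/
def ltFI {L : Type*} [Lattice L] (neg : L → L) :
    ↥(FIstates neg) → ↥(FIstates neg) → Prop :=
  fun p q => p.1.2 ∩ q.1.1 = ∅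

/-- The map `a ↦ â = {(F,I) : a ∈ F}`. -/
def hat {L : Type*} [Lattice L] (neg : L → L) (a : L) : Set ↥(FIstates neg) :=
  {p | a ∈ p.1.1}

/-- The spectral-style topology on `FI(L,¬)`, generated by the sets `â`. -/
def FItop {L : Type*} [Lattice L] (neg : L → L) : TopologicalSpace ↥(FIstates neg) :=
  TopologicalSpace.generateFrom {U | ∃ a : L, U = hat neg a}

/-!
Membership in `â` is dual to membership in ideals: a state `x` has a successor `x ◁ y` with
`y ∈ â` iff `a` is not in the ideal of `x`, and `x ∈ â` iff `a` is in the ideal of no predecessor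
`y ◁ x`. So `x ∈ c_◁ (⋃ a ∈ t, â)` says that no predecessor of `x` has all of the finite set `t`
in its ideal, i.e. `⋁ t` in its ideal, which is `x ∈ (⋁ t)^`. That one identity gives `0`,
binary joins and the fixpoint property, and shows that a fixpoint which is a finite union of
sets `â` is itself of this form. Compactness of `â` holds because for `a ≠ 0` it has a least
element for inclusion of filters, the state `(↑a, ↓¬a)`.
-/

open Order Set TopologicalSpace Topology

section Order

variable {P : Type*}

theorem not_le_of_disjoint [PartialOrder P] [OrderBot P] {a b : P} (hab : Disjoint a b)
    (ha : a ≠ ⊥) : ¬ a ≤ b :=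
  fun h => ha (hab.eq_bot_of_le h)

theorem disjoint_coe_pfilterPrincipal_iff [Preorder P] {I : Ideal P} {a : P} :
    Disjoint (I : Set P) (PFilter.principal a) ↔ a ∉ I := by
  rw [disjoint_left]
  exact ⟨fun h ha => h ha le_rfl, fun h b hb hab => h (I.lower hab hb)⟩

theorem disjoint_idealPrincipal_coe_iff [Preorder P] {F : PFilter P} {b : P} :
    Disjoint (Ideal.principal b : Set P) F ↔ b ∉ F := by
  rw [disjoint_left]
  exact ⟨fun h hb => h le_rfl hb, fun h a hab ha => h (PFilter.mem_of_le hab ha)⟩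

end Order

section LatticeSubsets

variable {L : Type*} [Lattice L]

theorem isLatIdeal_iff_isIdeal {I : Set L} : IsLatIdeal I ↔ IsIdeal I := by
  constructor
  · rintro ⟨hne, hlower, hsup⟩
    exact ⟨fun a b hba ha => hlower a ha b hba, hne,
      fun a ha b hb => ⟨a ⊔ b, hsup a ha b hb, le_sup_left, le_sup_right⟩⟩
  · intro h
    exact ⟨h.Nonempty, fun a ha b hba => h.IsLowerSet hba ha,
      fun _ ha _ hb => Ideal.sup_mem (s := h.toIdeal) ha hb⟩

theorem isLatFilter_iff_isPFilter {F : Set L} : IsLatFilter F ↔ IsPFilter F :=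
  isLatIdeal_iff_isIdeal (L := Lᵒᵈ)

end LatticeSubsets

namespace FIstates

variable {L : Type*} [Lattice L] {neg : L → L}

/-- The filter `F` of a state `(F, I)`, bundled so that the `Order.PFilter` API applies. -/
def filter (x : ↥(FIstates neg)) : PFilter L :=
  (isLatFilter_iff_isPFilter.1 x.2.1).toPFilter

/-- The ideal `I` of a state `(F, I)`, bundled so that the `Order.Ideal` API applies. -/
def ideal (x : ↥(FIstates neg)) : Ideal L :=
  (isLatIdeal_iff_isIdeal.1 x.2.2.1).toIdeal

theorem disjoint_ideal_filter (x : ↥(FIstates neg)) :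
    Disjoint (ideal x : Set L) (filter x) :=
  (disjoint_iff_inter_eq_empty.2 x.2.2.2.1).symm

theorem neg_mem_ideal {x : ↥(FIstates neg)} {a : L} (ha : a ∈ filter x) : neg a ∈ ideal x :=
  x.2.2.2.2 a ha

/-- The state `(↑a, ↓b)` of a principal filter and a principal ideal, the source of all witnesses
below; it is used with `b = ¬a` and with `a = ⊤`. -/
def principal (hanti : Antitone neg) {a b : L} (hab : ¬ a ≤ b) (hneg : neg a ≤ b) :
    ↥(FIstates neg) :=
  ⟨(Ici a, Iic b), isLatFilter_iff_isPFilter.2 (PFilter.principal a).isPFilter,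
    isLatIdeal_iff_isIdeal.2 (Ideal.principal b).isIdeal,
    disjoint_iff_inter_eq_empty.1 (Ici_disjoint_Iic.2 hab),
    fun _ hac => (hanti hac).trans hneg⟩

end FIstates

open FIstates

section Frame

variable {L : Type*} [Lattice L] {neg : L → L}

theorem mem_hat {x : ↥(FIstates neg)} {a : L} : x ∈ hat neg a ↔ a ∈ filter x :=
  Iff.rfl

theorem ltFI_iff_disjoint {x y : ↥(FIstates neg)} :
    ltFI neg x y ↔ Disjoint (ideal x : Set L) (filter y) :=
  disjoint_iff_inter_eq_empty.symm

theorem ltFI_refl (x : ↥(FIstates neg)) : ltFI neg x x :=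
  ltFI_iff_disjoint.2 (disjoint_ideal_filter x)

theorem ltFI.notMem_filter {x y : ↥(FIstates neg)} (hxy : ltFI neg x y) {a : L}
    (ha : a ∈ ideal x) : a ∉ filter y :=
  disjoint_left.1 (ltFI_iff_disjoint.1 hxy) ha

theorem ltFI_principal_iff (hanti : Antitone neg) {a b : L} (hab : ¬ a ≤ b) (hneg : neg a ≤ b)
    {x : ↥(FIstates neg)} : ltFI neg x (principal hanti hab hneg) ↔ a ∉ ideal x :=
  ltFI_iff_disjoint.trans disjoint_coe_pfilterPrincipal_iff

theorem principal_ltFI_iff (hanti : Antitone neg) {a b : L} (hab : ¬ a ≤ b) (hneg : neg a ≤ b)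
    {x : ↥(FIstates neg)} : ltFI neg (principal hanti hab hneg) x ↔ b ∉ filter x :=
  ltFI_iff_disjoint.trans disjoint_idealPrincipal_coe_iff

theorem principal_mem_hat_iff (hanti : Antitone neg) {a b c : L} (hab : ¬ a ≤ b)
    (hneg : neg a ≤ b) : principal hanti hab hneg ∈ hat neg c ↔ a ≤ c :=
  Iff.rfl

theorem hat_inf (a b : L) : hat neg (a ⊓ b) = hat neg a ∩ hat neg b :=
  ext fun x => PFilter.inf_mem_iff (F := filter x)

theorem hat_top [OrderTop L] : hat neg ⊤ = univ :=
  eq_univ_of_forall fun x => (filter x).top_mem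

theorem hat_bot [OrderBot L] : hat neg ⊥ = ∅ :=
  eq_empty_of_forall_notMem fun x => (ltFI_refl x).notMem_filter (ideal x).bot_mem

end Frame

section Protocomplementation

variable {L : Type*} [Lattice L] {neg : L → L}

theorem hat_subset_hat_iff [OrderBot L] (hanti : Antitone neg)
    (hdisj : ∀ a, Disjoint a (neg a)) {a b : L} : hat neg a ⊆ hat neg b ↔ a ≤ b := by
  refine ⟨fun h => ?_, fun hab x hx => PFilter.mem_of_le (F := filter x) hab hx⟩
  rcases eq_or_ne a ⊥ with rfl | ha
  · exact bot_le
  · have hmem : principal hanti (not_le_of_disjoint (hdisj a) ha) le_rfl ∈ hat neg a :=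
      (principal_mem_hat_iff ..).2 le_rfl
    exact (principal_mem_hat_iff ..).1 (h hmem)

theorem hat_injective [OrderBot L] (hanti : Antitone neg) (hdisj : ∀ a, Disjoint a (neg a)) :
    Function.Injective (hat neg) := fun _ _ h =>
  le_antisymm ((hat_subset_hat_iff hanti hdisj).1 h.subset)
    ((hat_subset_hat_iff hanti hdisj).1 h.superset)

theorem exists_ltFI_mem_hat_iff [OrderBot L] (hanti : Antitone neg)
    (hdisj : ∀ a, Disjoint a (neg a)) {x : ↥(FIstates neg)} {a : L} :
    (∃ y, ltFI neg x y ∧ y ∈ hat neg a) ↔ a ∉ ideal x := by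
  refine ⟨fun ⟨y, hxy, hy⟩ ha => hxy.notMem_filter ha hy, fun hx => ?_⟩
  have ha : a ≠ ⊥ := ne_of_mem_of_not_mem (ideal x).bot_mem hx |>.symm
  exact ⟨principal hanti (not_le_of_disjoint (hdisj a) ha) le_rfl,
    (ltFI_principal_iff ..).2 hx, (principal_mem_hat_iff ..).2 le_rfl⟩

theorem mem_hat_iff_forall_ltFI [BoundedOrder L] (hanti : Antitone neg)
    (hdisj : ∀ a, Disjoint a (neg a)) {x : ↥(FIstates neg)} {a : L} :
    x ∈ hat neg a ↔ ∀ y, ltFI neg y x → a ∉ ideal y := by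
  refine ⟨fun hx y hyx ha => hyx.notMem_filter ha hx, fun h => ?_⟩
  by_contra hx
  have htop : ¬ ⊤ ≤ a := fun hle => hx (PFilter.mem_of_le hle (filter x).top_mem)
  have hneg : neg ⊤ ≤ a := (top_disjoint.1 (hdisj ⊤)).trans_le bot_le
  exact h (principal hanti htop hneg) ((principal_ltFI_iff ..).2 hx) le_rfl

theorem hat_finset_sup [BoundedOrder L] (hanti : Antitone neg)
    (hdisj : ∀ a, Disjoint a (neg a)) (t : Finset L) :
    hat neg (t.sup id) = cl (ltFI neg) (⋃ a ∈ t, hat neg a) := by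
  ext x
  rw [mem_hat_iff_forall_ltFI hanti hdisj]
  refine forall₂_congr fun y _ => ?_
  calc t.sup id ∉ ideal y
      ↔ ∃ a ∈ t, a ∉ ideal y := by simp
    _ ↔ ∃ a ∈ t, ∃ z, ltFI neg y z ∧ z ∈ hat neg a := by
        simp only [exists_ltFI_mem_hat_iff hanti hdisj]
    _ ↔ ∃ z, ltFI neg y z ∧ z ∈ ⋃ a ∈ t, hat neg a := by
        simp only [mem_iUnion₂, exists_prop]
        grind

theorem cl_hat [BoundedOrder L] (hanti : Antitone neg) (hdisj : ∀ a, Disjoint a (neg a))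
    (a : L) : cl (ltFI neg) (hat neg a) = hat neg a := by
  simpa using (hat_finset_sup hanti hdisj {a}).symm

theorem hat_bot_eq_cl_empty [BoundedOrder L] (hanti : Antitone neg)
    (hdisj : ∀ a, Disjoint a (neg a)) : hat neg ⊥ = cl (ltFI neg) ∅ := by
  simpa using hat_finset_sup hanti hdisj ∅

theorem hat_sup [BoundedOrder L] (hanti : Antitone neg) (hdisj : ∀ a, Disjoint a (neg a))
    (a b : L) : hat neg (a ⊔ b) = cl (ltFI neg) (hat neg a ∪ hat neg b) := by
  classical
  simpa using hat_finset_sup hanti hdisj {a, b}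

theorem hat_neg [BoundedOrder L] (hanti : Antitone neg) (hdisj : ∀ a, Disjoint a (neg a))
    (hbot : neg ⊥ = ⊤) (a : L) : hat neg (neg a) = negSet (ltFI neg) (hat neg a) := by
  ext x
  refine ⟨fun hx y hyx hy => hyx.notMem_filter (neg_mem_ideal hy) hx, fun h => ?_⟩
  rcases eq_or_ne a ⊥ with rfl | ha
  · rw [hbot, hat_top]
    exact mem_univ x
  · by_contra hx
    exact h (principal hanti (not_le_of_disjoint (hdisj a) ha) le_rfl)
      ((principal_ltFI_iff ..).2 hx) ((principal_mem_hat_iff ..).2 le_rfl)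

end Protocomplementation

section Topology

variable {L : Type*} [Lattice L] {neg : L → L}

local instance : TopologicalSpace ↥(FIstates neg) :=
  FItop neg

theorem isOpen_hat (a : L) : IsOpen (hat neg a) :=
  isOpen_generateFrom_of_mem ⟨a, rfl⟩

theorem FItop_eq_generateFrom_range : FItop neg = generateFrom (range (hat neg)) := by
  simp only [FItop, range, eq_comm]

theorem isTopologicalBasis_range_hat [OrderTop L] : IsTopologicalBasis (range (hat neg)) := by
  refine isTopologicalBasis_of_subbasis_of_finiteInter FItop_eq_generateFrom_range
    ⟨⟨⊤, hat_top⟩, ?_⟩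
  rintro _ ⟨a, rfl⟩ _ ⟨b, rfl⟩
  exact ⟨a ⊓ b, hat_inf a b⟩

theorem specializes_iff_filter_le {x y : ↥(FIstates neg)} :
    x ⤳ y ↔ filter y ≤ filter x := by
  refine ⟨fun h a ha => h.mem_open (isOpen_hat a) ha, fun h => ?_⟩
  rw [specializes_iff_pure, show 𝓝 y = _ from nhds_generateFrom, le_iInf₂_iff]
  rintro _ ⟨hy, a, rfl⟩
  exact Filter.pure_le_principal _ |>.2 (h hy)

theorem nhdsKer_principal (hanti : Antitone neg) {a b : L} (hab : ¬ a ≤ b) (hneg : neg a ≤ b) :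
    nhdsKer {principal hanti hab hneg} = hat neg a := by
  ext x
  rw [mem_nhdsKer_singleton, specializes_iff_filter_le]
  exact PFilter.principal_le_iff

theorem isCompact_hat [OrderBot L] (hanti : Antitone neg) (hdisj : ∀ a, Disjoint a (neg a))
    (a : L) : IsCompact (hat neg a) := by
  rcases eq_or_ne a ⊥ with rfl | ha
  · rw [hat_bot]
    exact isCompact_empty
  · rw [← nhdsKer_principal hanti (not_le_of_disjoint (hdisj a) ha) le_rfl]
    exact isCompact_singleton.nhdsKer

theorem exists_hat_eq_of_isCompact_of_isOpen [BoundedOrder L] (hanti : Antitone neg)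
    (hdisj : ∀ a, Disjoint a (neg a)) {A : Set ↥(FIstates neg)} (hcl : cl (ltFI neg) A = A)
    (hcomp : IsCompact A) (hopen : IsOpen A) : ∃ a, hat neg a = A := by
  obtain ⟨s, hs, rfl⟩ := eq_finite_iUnion_of_isTopologicalBasis_of_isCompact_open _
    isTopologicalBasis_range_hat A hcomp hopen
  lift s to Finset L using hs
  exact ⟨s.sup id, (hat_finset_sup hanti hdisj s).trans hcl⟩

end Topology

/-- For a bounded lattice `L` with a protocomplementation `¬` (antitone, `a ⊓ ¬a = ⊥`,
`¬⊥ = ⊤`), the map `a ↦ â` is: (1) an embedding of `(L,¬)` into `(𝔏(FI(L,¬)), ¬_◁)`: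
each `â` is a `c_◁`-fixpoint, the map is injective and preserves `0`, `1`, binary meets,
binary joins, and `¬`; and (2) an isomorphism onto the subalgebra of those `c_◁`-fixpoints
that are compact open in the space `S(L)`. -/
theorem stmt_15 {L : Type*} [Lattice L] [BoundedOrder L] (neg : L → L)
    (hanti : ∀ a b : L, a ≤ b → neg b ≤ neg a)
    (hsemi : ∀ a : L, a ⊓ neg a = ⊥)
    (hbot : neg ⊥ = ⊤) :
    (∀ a : L, cl (ltFI neg) (hat neg a) = hat neg a) ∧
    Function.Injective (hat neg) ∧
    hat neg (⊥ : L) = cl (ltFI neg) ∅ ∧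
    hat neg (⊤ : L) = Set.univ ∧
    (∀ a b : L, hat neg (a ⊓ b) = hat neg a ∩ hat neg b) ∧
    (∀ a b : L, hat neg (a ⊔ b) = cl (ltFI neg) (hat neg a ∪ hat neg b)) ∧
    (∀ a : L, hat neg (neg a) = negSet (ltFI neg) (hat neg a)) ∧
    (∀ a : L, @IsCompact _ (FItop neg) (hat neg a) ∧ @IsOpen _ (FItop neg) (hat neg a)) ∧
    (∀ A : Set ↥(FIstates neg), cl (ltFI neg) A = A →
      @IsCompact _ (FItop neg) A → @IsOpen _ (FItop neg) A → ∃ a : L, hat neg a = A) := by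
  have hantitone : Antitone neg := fun a b => hanti a b
  have hdisj : ∀ a, Disjoint a (neg a) := fun a => disjoint_iff.2 (hsemi a)
  exact ⟨cl_hat hantitone hdisj, hat_injective hantitone hdisj, hat_bot_eq_cl_empty hantitone hdisj,
    hat_top, hat_inf, hat_sup hantitone hdisj, hat_neg hantitone hdisj hbot,
    fun a => ⟨isCompact_hat hantitone hdisj a, isOpen_hat a⟩,
    fun _ => exists_hat_eq_of_isCompact_of_isOpen hantitone hdisj⟩
end

section
/- For all formulas φ, ψ of the propositional language 𝓛: φ ⊢_F ψ (where ⊢_F is the smallest intro-elim logic) if and only if for every bounded lattice L equipped with a weak pseudocomplementation ¬ and every valuation θ on (L,¬), the extended valuation satisfies θ̃(φ) ≤ θ̃(ψ). -/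
/-- Formulas of the propositional language `𝓛` over a set `P` of propositional variables. -/
inductive Form (P : Type) : Type
  | var : P → Form P
  | neg : Form P → Form P
  | conj : Form P → Form P → Form P
  | disj : Form P → Form P → Form P

/-- `r` is an intro-elim logic. -/
def IsIntroElim {P : Type} (r : Form P → Form P → Prop) : Prop :=
  (∀ φ, r φ φ) ∧
  (∀ φ ψ, r (Form.conj φ ψ) φ) ∧
  (∀ φ ψ, r (Form.conj φ ψ) ψ) ∧
  (∀ φ ψ, r φ (Form.disj φ ψ)) ∧
  (∀ φ ψ, r φ (Form.disj ψ φ)) ∧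
  (∀ φ, r φ (Form.neg (Form.neg φ))) ∧
  (∀ φ ψ, r (Form.conj φ (Form.neg φ)) ψ) ∧
  (∀ φ ψ χ, r φ ψ → r ψ χ → r φ χ) ∧
  (∀ φ ψ χ, r φ ψ → r φ χ → r φ (Form.conj ψ χ)) ∧
  (∀ φ ψ χ, r φ χ → r ψ χ → r (Form.disj φ ψ) χ) ∧
  (∀ φ ψ, r φ ψ → r (Form.neg ψ) (Form.neg φ))

/-- The fundamental logic `⊢_F`: the smallest intro-elim logic. -/
def FProv {P : Type} (φ ψ : Form P) : Prop :=
  ∀ r : Form P → Form P → Prop, IsIntroElim r → r φ ψ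

/-- Extension `θ̃` of a valuation `θ` to all formulas. -/
def eval {P L : Type} [Lattice L] (neg : L → L) (θ : P → L) : Form P → L
  | Form.var p => θ p
  | Form.neg φ => neg (eval neg θ φ)
  | Form.conj φ ψ => eval neg θ φ ⊓ eval neg θ ψ
  | Form.disj φ ψ => eval neg θ φ ⊔ eval neg θ ψ

/-!
Formulas preordered by an intro-elim logic `r` and quotiented by interderivability form a bounded
lattice on which `¬` is a weak pseudocomplementation: `p ∧ ¬p` is its bottom by explosion, and then
`¬⊥` is its top. The valuation sending each variable to its own class evaluates every formula to its
own class, so inequalities under that single valuation are exactly the derivations of `r`; for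
`r = ⊢_F` this is completeness. Conversely, comparing the values of formulas under a valuation
is itself an intro-elim logic, hence contains `⊢_F`; this is soundness.
-/

/-- Weak pseudocomplementations, the negations of the algebraic semantics. Kept a predicate on an
operation, not a class, since `eval` takes the operation as an argument. -/
structure IsWeakPseudocomplementation {L : Type*} [SemilatticeInf L] [OrderBot L]
    (neg : L → L) : Prop where
  antitone : Antitone neg
  inf_neg_eq_bot (a : L) : a ⊓ neg a = ⊥
  le_neg_neg (a : L) : a ≤ neg (neg a)

theorem IsWeakPseudocomplementation.le_neg_bot {L : Type*} [SemilatticeInf L] [OrderBot L]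
    {neg : L → L} (hneg : IsWeakPseudocomplementation neg) (a : L) : a ≤ neg ⊥ :=
  (hneg.le_neg_neg a).trans (hneg.antitone bot_le)

namespace IsIntroElim

variable {P : Type} {r : Form P → Form P → Prop} (hr : IsIntroElim r) {φ φ' ψ ψ' χ : Form P}
include hr

theorem refl (φ : Form P) : r φ φ := hr.1 φ

theorem conj_left (φ ψ : Form P) : r (φ.conj ψ) φ := hr.2.1 φ ψ

theorem conj_right (φ ψ : Form P) : r (φ.conj ψ) ψ := hr.2.2.1 φ ψ

theorem disj_inl (φ ψ : Form P) : r φ (φ.disj ψ) := hr.2.2.2.1 φ ψ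

theorem disj_inr (φ ψ : Form P) : r ψ (φ.disj ψ) := hr.2.2.2.2.1 ψ φ

theorem neg_neg (φ : Form P) : r φ φ.neg.neg := hr.2.2.2.2.2.1 φ

theorem explosion (φ ψ : Form P) : r (φ.conj φ.neg) ψ := hr.2.2.2.2.2.2.1 φ ψ

theorem trans : r φ ψ → r ψ χ → r φ χ := hr.2.2.2.2.2.2.2.1 φ ψ χ

theorem conj_intro : r φ ψ → r φ χ → r φ (ψ.conj χ) := hr.2.2.2.2.2.2.2.2.1 φ ψ χ

theorem disj_elim : r φ χ → r ψ χ → r (φ.disj ψ) χ := hr.2.2.2.2.2.2.2.2.2.1 φ ψ χ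

theorem contrapose : r φ ψ → r ψ.neg φ.neg := hr.2.2.2.2.2.2.2.2.2.2 φ ψ

theorem conj_mono (hφ : r φ φ') (hψ : r ψ ψ') : r (φ.conj ψ) (φ'.conj ψ') :=
  hr.conj_intro (hr.trans (hr.conj_left φ ψ) hφ) (hr.trans (hr.conj_right φ ψ) hψ)

theorem disj_mono (hφ : r φ φ') (hψ : r ψ ψ') : r (φ.disj ψ) (φ'.disj ψ') :=
  hr.disj_elim (hr.trans hφ (hr.disj_inl φ' ψ')) (hr.trans hψ (hr.disj_inr φ' ψ'))

end IsIntroElim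

theorem isIntroElim_fProv {P : Type} : IsIntroElim (FProv (P := P)) :=
  ⟨fun φ _ hr => hr.refl φ,
    fun φ ψ _ hr => hr.conj_left φ ψ,
    fun φ ψ _ hr => hr.conj_right φ ψ,
    fun φ ψ _ hr => hr.disj_inl φ ψ,
    fun φ ψ _ hr => hr.disj_inr ψ φ,
    fun φ _ hr => hr.neg_neg φ,
    fun φ ψ _ hr => hr.explosion φ ψ,
    fun _ _ _ hφψ hψχ r hr => hr.trans (hφψ r hr) (hψχ r hr),
    fun _ _ _ hφψ hφχ r hr => hr.conj_intro (hφψ r hr) (hφχ r hr),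
    fun _ _ _ hφχ hψχ r hr => hr.disj_elim (hφχ r hr) (hψχ r hr),
    fun _ _ hφψ r hr => hr.contrapose (hφψ r hr)⟩

theorem isIntroElim_eval_le {P L : Type} [Lattice L] [OrderBot L] {neg : L → L}
    (hneg : IsWeakPseudocomplementation neg) (θ : P → L) :
    IsIntroElim fun φ ψ => eval neg θ φ ≤ eval neg θ ψ :=
  ⟨fun _ => le_rfl,
    fun _ _ => inf_le_left,
    fun _ _ => inf_le_right,
    fun _ _ => le_sup_left,
    fun _ _ => le_sup_right,
    fun _ => hneg.le_neg_neg _,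
    fun _ _ => (hneg.inf_neg_eq_bot _).trans_le bot_le,
    fun _ _ _ => le_trans,
    fun _ _ _ => le_inf,
    fun _ _ _ => sup_le,
    fun _ _ hφψ => hneg.antitone hφψ⟩

/-- The preorder on formulas given by derivability in an intro-elim logic `r`, a definition
and not an instance since formulas carry one such preorder for each `r`. -/
abbrev IsIntroElim.toPreorder {P : Type} {r : Form P → Form P → Prop} (hr : IsIntroElim r) :
    Preorder (Form P) where
  le := r
  le_refl := hr.refl
  le_trans _ _ _ := hr.trans

/-- The Lindenbaum–Tarski algebra of an intro-elim logic `r`: formulas up to `r`-interderivability,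
ordered by `r`. -/
def Lindenbaum {P : Type} {r : Form P → Form P → Prop} (hr : IsIntroElim r) : Type :=
  letI := hr.toPreorder
  Antisymmetrization (Form P) (· ≤ ·)

namespace Lindenbaum

variable {P : Type} {r : Form P → Form P → Prop} {hr : IsIntroElim r}

instance : PartialOrder (Lindenbaum hr) :=
  @instPartialOrderAntisymmetrization (Form P) hr.toPreorder

/-- The class of a formula in the Lindenbaum–Tarski algebra. -/
def mk (hr : IsIntroElim r) : Form P → Lindenbaum hr :=
  letI := hr.toPreorder
  toAntisymmetrization (· ≤ ·)

theorem mk_le_mk {φ ψ : Form P} : mk hr φ ≤ mk hr ψ ↔ r φ ψ := Iff.rfl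

instance : Lattice (Lindenbaum hr) where
  inf := Quotient.map₂ Form.conj fun _ _ hφ _ _ hψ =>
    ⟨hr.conj_mono hφ.1 hψ.1, hr.conj_mono hφ.2 hψ.2⟩
  sup := Quotient.map₂ Form.disj fun _ _ hφ _ _ hψ =>
    ⟨hr.disj_mono hφ.1 hψ.1, hr.disj_mono hφ.2 hψ.2⟩
  inf_le_left := by rintro ⟨φ⟩ ⟨ψ⟩; exact hr.conj_left φ ψ
  inf_le_right := by rintro ⟨φ⟩ ⟨ψ⟩; exact hr.conj_right φ ψ
  le_inf := by rintro ⟨φ⟩ ⟨ψ⟩ ⟨χ⟩; exact hr.conj_intro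
  le_sup_left := by rintro ⟨φ⟩ ⟨ψ⟩; exact hr.disj_inl φ ψ
  le_sup_right := by rintro ⟨φ⟩ ⟨ψ⟩; exact hr.disj_inr φ ψ
  sup_le := by rintro ⟨φ⟩ ⟨ψ⟩ ⟨χ⟩; exact hr.disj_elim

/-- The negation induced on the Lindenbaum–Tarski algebra. -/
def neg : Lindenbaum hr → Lindenbaum hr :=
  Quotient.map Form.neg fun _ _ h => ⟨hr.contrapose h.2, hr.contrapose h.1⟩

theorem mk_neg (φ : Form P) : mk hr φ.neg = neg (mk hr φ) := rfl

theorem mk_conj (φ ψ : Form P) : mk hr (φ.conj ψ) = mk hr φ ⊓ mk hr ψ := rfl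

theorem mk_disj (φ ψ : Form P) : mk hr (φ.disj ψ) = mk hr φ ⊔ mk hr ψ := rfl

theorem eval_mk_var (φ : Form P) : eval neg (fun p => mk hr (.var p)) φ = mk hr φ := by
  induction φ with
  | var p => rfl
  | neg φ ih => rw [eval, ih, mk_neg]
  | conj φ ψ ihφ ihψ => rw [eval, ihφ, ihψ, mk_conj]
  | disj φ ψ ihφ ihψ => rw [eval, ihφ, ihψ, mk_disj]

theorem eval_mk_var_le_iff {φ ψ : Form P} :
    eval neg (fun p => mk hr (.var p)) φ ≤ eval neg (fun p => mk hr (.var p)) ψ ↔ r φ ψ := by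
  rw [eval_mk_var, eval_mk_var, mk_le_mk]

variable [Nonempty P]

noncomputable instance : OrderBot (Lindenbaum hr) where
  bot :=
    let p : Form P := .var (Classical.arbitrary P)
    mk hr (p.conj p.neg)
  bot_le := by rintro ⟨φ⟩; exact hr.explosion _ φ

theorem isWeakPseudocomplementation_neg :
    IsWeakPseudocomplementation (neg : Lindenbaum hr → Lindenbaum hr) where
  antitone := by rintro ⟨φ⟩ ⟨ψ⟩; exact hr.contrapose
  inf_neg_eq_bot := by rintro ⟨φ⟩; exact le_bot_iff.1 (hr.explosion φ _)
  le_neg_neg := by rintro ⟨φ⟩; exact hr.neg_neg φ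

noncomputable instance : BoundedOrder (Lindenbaum hr) where
  top := neg ⊥
  le_top := isWeakPseudocomplementation_neg.le_neg_bot

end Lindenbaum

/-- Soundness and completeness of the fundamental logic with respect to bounded lattices
equipped with a weak pseudocomplementation. -/
theorem stmt_18 {P : Type} [Nonempty P] (φ ψ : Form P) :
    FProv φ ψ ↔
      ∀ (L : Type) (_ : Lattice L) (_ : BoundedOrder L) (neg : L → L),
        ((∀ a b : L, a ≤ b → neg b ≤ neg a) ∧ (∀ a : L, a ⊓ neg a = ⊥) ∧
          (∀ a : L, a ≤ neg (neg a))) →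
        ∀ θ : P → L, eval neg θ φ ≤ eval neg θ ψ := by
  constructor
  · rintro hφψ L _ _ neg ⟨hanti, hinf, hnn⟩ θ
    have hneg : IsWeakPseudocomplementation neg := ⟨fun a b => hanti a b, hinf, hnn⟩
    exact hφψ _ (isIntroElim_eval_le hneg θ)
  · intro hvalid
    have hP : IsIntroElim (FProv (P := P)) := isIntroElim_fProv
    have hneg := Lindenbaum.isWeakPseudocomplementation_neg (hr := hP)
    have hle := hvalid (Lindenbaum hP) inferInstance inferInstance Lindenbaum.neg
      ⟨fun _ _ hab => hneg.antitone hab, hneg.inf_neg_eq_bot, hneg.le_neg_neg⟩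
      fun p => Lindenbaum.mk hP (.var p)
    exact Lindenbaum.eval_mk_var_le_iff.1 hle
end
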